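/- (Contact/measure estimate) There exist constants M > 1 and θ ∈ (0,1) depending only on n, λ, Λ such that: if a_{ij} : B₁ → ℝ are uniformly elliptic measurable coefficients and v ∈ C²(B₁) is nonnegative, satisfies Σ_{i,j} a_{ij}(x) ∂_{ij} v(x) ≤ 0 for all x ∈ B₁, and v(0) ≤ 1, then for every x₀ ∈ B_{1/4}, |{x ∈ B_{1/8}(x₀) : v(x) < M}| ≥ θ |B_{1/8}(x₀)|. -/

import Mathlib

open MeasureTheory Metric Set Filter
open scoped ENNReal NNReal Topology

noncomputable section

/-- Euclidean space `ℝⁿ`. -/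
abbrev En (n : ℕ) := EuclideanSpace ℝ (Fin n)

/-- The second partial derivative `∂_{ij} v (x)`. -/
def pd2 {n : ℕ} (v : En n → ℝ) (i j : Fin n) (x : En n) : ℝ :=
  fderiv ℝ (fun y => fderiv ℝ v y (EuclideanSpace.single i 1)) x (EuclideanSpace.single j 1)

/-- Measurable, uniformly elliptic coefficients on `Ω`:
`λ|ξ|² ≤ Σ aᵢⱼ(x) ξᵢ ξⱼ ≤ Λ|ξ|²` for every `x ∈ Ω` and all `ξ`. -/
def UnifEllipticOn {n : ℕ} (Ω : Set (En n)) (lam Lam : ℝ)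
    (a : Fin n → Fin n → En n → ℝ) : Prop :=
  (∀ i j, Measurable (a i j)) ∧
    ∀ x ∈ Ω, ∀ ξ : En n,
      lam * ∑ i, ξ i ^ 2 ≤ ∑ i, ∑ j, a i j x * ξ i * ξ j ∧
      ∑ i, ∑ j, a i j x * ξ i * ξ j ≤ Lam * ∑ i, ξ i ^ 2


lemma pd2_eq {n : ℕ} {v : En n → ℝ} {x : En n} (h : ContDiffAt ℝ 2 v x) (i j : Fin n) :
    pd2 v i j x = fderiv ℝ (fderiv ℝ v) x (EuclideanSpace.single j 1)
      (EuclideanSpace.single i 1) := by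
  have h1 : DifferentiableAt ℝ (fderiv ℝ v) x :=
    (h.fderiv_right (m := 1) (by norm_num)).differentiableAt (by norm_num)
  unfold pd2
  rw [fderiv_clm_apply h1 (differentiableAt_const _)]
  simp

lemma second_deriv_nonneg {n : ℕ} {k : En n → ℝ} {x : En n} (h : ContDiffAt ℝ 2 k x)
    (hm : IsLocalMin k x) (ξ : En n) : 0 ≤ fderiv ℝ (fderiv ℝ k) x ξ ξ := by
  by_contra hneg
  push Not at hneg
  have h1 : DifferentiableAt ℝ (fderiv ℝ k) x :=
    (h.fderiv_right (m := 1) (by norm_num)).differentiableAt (by norm_num)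
  let l : ℝ → En n := fun t => x + t • ξ
  have hl0 : l 0 = x := by simp [l]
  have hl : ∀ t, HasDerivAt l ξ t := fun t => by
    simpa [l] using ((hasDerivAt_id t).smul_const ξ).const_add x
  have hlc : Tendsto l (𝓝 0) (𝓝 x) := by
    simpa [hl0] using (hl 0).continuousAt.tendsto
  have hev : ∀ᶠ y in 𝓝 x, DifferentiableAt ℝ k y :=
    (h.eventually (by simp)).mono fun y hy => hy.differentiableAt (by norm_num)
  have hd : ∀ᶠ t in 𝓝 (0:ℝ), deriv (k ∘ l) t = fderiv ℝ k (l t) ξ :=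
    (hlc.eventually hev).mono fun t ht => (ht.hasFDerivAt.comp_hasDerivAt t (hl t)).deriv
  have hdd : deriv (deriv (k ∘ l)) 0 = fderiv ℝ (fderiv ℝ k) x ξ ξ := by
    rw [EventuallyEq.deriv_eq hd]
    have h2 : HasFDerivAt (fderiv ℝ k) (fderiv ℝ (fderiv ℝ k) x) (l 0) := by
      rw [hl0]; exact h1.hasFDerivAt
    have := (h2.comp_hasDerivAt (0:ℝ) (hl 0)).clm_apply (hasDerivAt_const (0:ℝ) ξ)
    simpa using this.deriv
  have hmin : IsLocalMin (k ∘ l) 0 := by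
    have := hlc.eventually hm
    simpa [IsLocalMin, IsMinFilter, hl0] using this
  have hc : ContinuousAt (k ∘ l) 0 := by
    apply ContinuousAt.comp _ (hl 0).continuousAt
    rw [hl0]; exact h.continuousAt
  have hmax := isLocalMax_of_deriv_deriv_neg (by rw [hdd]; exact hneg) hmin.deriv_eq_zero hc
  have heq : (k ∘ l) =ᶠ[𝓝 0] fun _ => (k ∘ l) 0 := by
    filter_upwards [hmin, hmax] with t h1 h2 using le_antisymm h2 h1
  have : deriv (deriv (k ∘ l)) 0 = 0 := by
    rw [heq.deriv.deriv_eq]; simp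
  linarith

lemma sum_single {n : ℕ} (ξ : Fin n → ℝ) :
    WithLp.toLp 2 ξ = ∑ i, ξ i • (EuclideanSpace.single i 1 : En n) := by
  ext j
  simp [Finset.sum_apply, Pi.single_apply]

lemma pd2_posSemidef {n : ℕ} {k : En n → ℝ} {x : En n} (h : ContDiffAt ℝ 2 k x)
    (hm : IsLocalMin k x) : (Matrix.of fun i j => pd2 k i j x).PosSemidef := by
  apply Matrix.PosSemidef.of_dotProduct_mulVec_nonneg
  · ext i j
    simp only [Matrix.conjTranspose_apply, Matrix.of_apply, star_trivial]
    rw [pd2_eq h, pd2_eq h]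
    exact (h.isSymmSndFDerivAt (by simp)).eq _ _
  · intro ξ
    have := second_deriv_nonneg h hm (WithLp.toLp 2 ξ)
    rw [sum_single] at this
    simp only [map_sum, map_smul, _root_.sum_apply, _root_.smul_apply,
      smul_eq_mul] at this
    refine this.trans_eq ?_
    simp only [dotProduct, Matrix.mulVec, Matrix.of_apply, star_trivial, pd2_eq h, Finset.mul_sum]
    refine Finset.sum_congr rfl fun i _ => Finset.sum_congr rfl fun j _ => ?_
    rw [(h.isSymmSndFDerivAt (by simp)).eq]
    ring

def gradMap {n : ℕ} (h : En n → ℝ) (x : En n) : En n :=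
  WithLp.toLp 2 fun i => fderiv ℝ h x (EuclideanSpace.single i 1)

lemma area {n : ℕ} {h : En n → ℝ} {S : Set (En n)} (hS : MeasurableSet S)
    (hh : ∀ x ∈ S, ContDiffAt ℝ 2 h x) {C : ℝ} 
    (hC : ∀ x ∈ S, ∀ i j, |pd2 h i j x| ≤ C) :
    volume (gradMap h '' S) ≤ ENNReal.ofReal (n.factorial * C ^ n) * volume S := by
  let f' : En n → (En n →L[ℝ] En n) := fun x =>
    LinearMap.toContinuousLinearMap (Matrix.toLpLin 2 2 (Matrix.of fun i j => pd2 h i j x))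
  refine (addHaar_image_le_lintegral_abs_det_fderiv volume hS (f' := f') ?_).trans ?_
  · intro x hx
    apply HasFDerivAt.hasFDerivWithinAt
    have h1 : DifferentiableAt ℝ (fderiv ℝ h) x :=
      ((hh x hx).fderiv_right (m := 1) (by norm_num)).differentiableAt (by norm_num)
    rw [← hasFDerivWithinAt_univ, hasFDerivWithinAt_euclidean]
    intro i
    rw [hasFDerivWithinAt_univ]
    have h2 : HasFDerivAt (fun y => fderiv ℝ h y (EuclideanSpace.single i 1)) _ x :=
      (h1.clm_apply (differentiableAt_const (c := (EuclideanSpace.single i 1 : En n)))).hasFDerivAt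
    refine HasFDerivAt.congr_fderiv h2 ?_
    ext ξ
    have e : ξ = ∑ j, ξ j • (EuclideanSpace.single j 1 : En n) := sum_single _
    conv_lhs => rw [e]
    simp only [map_sum, map_smul, smul_eq_mul]
    simp [f', Matrix.mulVec, dotProduct, pd2, mul_comm]
  · rw [← setLIntegral_const]
    refine setLIntegral_mono' hS fun x hx => ?_
    apply ENNReal.ofReal_le_ofReal
    have : (f' x).det = (Matrix.of fun i j => pd2 h i j x).det := by
      simp only [f', ContinuousLinearMap.det]
      exact LinearMap.det_toLpLin 2 _
    rw [this]
    have := Matrix.det_le (A := Matrix.of fun i j => pd2 h i j x) (abv := AbsoluteValue.abs)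
      (x := C) (fun i j => by simpa using hC x hx i j)
    simpa using this

lemma ell_trace {n : ℕ} {N A : Matrix (Fin n) (Fin n) ℝ} (hN : N.PosSemidef) {lam : ℝ}
    (hA : ∀ ξ : En n, lam * ∑ i, ξ i ^ 2 ≤ ∑ i, ∑ j, A i j * ξ i * ξ j) :
    lam * ∑ i, N i i ≤ ∑ i, ∑ j, A i j * N i j := by
  obtain ⟨m, u, rfl⟩ := Matrix.posSemidef_iff_eq_sum_vecMulVec.1 hN
  simp only [Matrix.sum_apply, Matrix.vecMulVec_apply, star_trivial]
  have h : ∑ k, lam * ∑ i, u k i ^ 2 ≤ ∑ k, ∑ i, ∑ j, A i j * u k i * u k j :=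
    Finset.sum_le_sum fun k _ => hA (WithLp.toLp 2 (u k))
  calc lam * ∑ i, ∑ k, u k i * u k i = ∑ k, lam * ∑ i, u k i ^ 2 := by
        rw [Finset.sum_comm, Finset.mul_sum]
        simp only [sq]
    _ ≤ _ := h
    _ = _ := by
        rw [Finset.sum_comm]
        refine Finset.sum_congr rfl fun i _ => ?_
        rw [Finset.sum_comm]
        refine Finset.sum_congr rfl fun j _ => ?_
        rw [Finset.mul_sum]
        simp only [mul_assoc]

lemma psd_diag_nonneg {n : ℕ} {N : Matrix (Fin n) (Fin n) ℝ} (hN : N.PosSemidef) (i : Fin n) :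
    0 ≤ N i i := by
  obtain ⟨m, u, rfl⟩ := Matrix.posSemidef_iff_eq_sum_vecMulVec.1 hN
  simp only [Matrix.sum_apply, Matrix.vecMulVec_apply, star_trivial]
  exact Finset.sum_nonneg fun k _ => mul_self_nonneg _

lemma psd_entry_le {n : ℕ} {N : Matrix (Fin n) (Fin n) ℝ} (hN : N.PosSemidef) (i j : Fin n) :
    |N i j| ≤ ∑ i, N i i := by
  have hd := psd_diag_nonneg hN
  have h1 : N i i ≤ ∑ i, N i i := Finset.single_le_sum (fun i _ => hd i) (Finset.mem_univ i)
  have h2 : N j j ≤ ∑ i, N i i := Finset.single_le_sum (fun i _ => hd i) (Finset.mem_univ j)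
  have h3 : 2 * |N i j| ≤ N i i + N j j := by
    clear h1 h2 hd
    obtain ⟨m, u, rfl⟩ := Matrix.posSemidef_iff_eq_sum_vecMulVec.1 hN
    simp only [Matrix.sum_apply, Matrix.vecMulVec_apply, star_trivial]
    rw [← Finset.sum_add_distrib]
    calc 2 * |∑ k, u k i * u k j| ≤ 2 * ∑ k, |u k i * u k j| := by
          gcongr; exact Finset.abs_sum_le_sum_abs _ _
      _ = ∑ k, 2 * |u k i * u k j| := Finset.mul_sum _ _ _
      _ ≤ _ := Finset.sum_le_sum fun k _ => by
          rw [abs_mul]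
          nlinarith [sq_nonneg (|u k i| - |u k j|), abs_mul_abs_self (u k i),
            abs_mul_abs_self (u k j)]
  linarith

def hfun {n : ℕ} (b : ℝ) (v : En n → ℝ) (x : En n) : ℝ := (1 / 2) * ‖x‖ ^ 2 + b * Real.log (v x + 1)

lemma hfun_contDiffAt {n : ℕ} {b : ℝ} {v : En n → ℝ} {x : En n} (hv : ContDiffAt ℝ 2 v x)
    (hpos : 0 ≤ v x) : ContDiffAt ℝ 2 (hfun b v) x := by
  unfold hfun
  have h1 : ContDiffAt ℝ 2 (fun x : En n => ‖x‖ ^ 2) x := (contDiff_norm_sq ℝ).contDiffAt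
  have h2 : ContDiffAt ℝ 2 (fun x => Real.log (v x + 1)) x :=
    (hv.add contDiffAt_const).log (by positivity)
  exact (contDiffAt_const.mul h1).add (contDiffAt_const.mul h2)

lemma hfun_fderiv {n : ℕ} {b : ℝ} {v : En n → ℝ} {x : En n} (hv : DifferentiableAt ℝ v x)
    (hpos : 0 ≤ v x) (ξ : En n) :
    fderiv ℝ (hfun b v) x ξ = inner ℝ x ξ + b * ((v x + 1)⁻¹ * fderiv ℝ v x ξ) := by
  have h1 : HasFDerivAt (fun x : En n => (1 / 2) * ‖x‖ ^ 2) _ x :=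
    ((hasStrictFDerivAt_norm_sq x).hasFDerivAt).const_mul (1 / 2)
  have h2 : HasFDerivAt (fun x => b * Real.log (v x + 1)) _ x :=
    (((hv.hasFDerivAt.add_const 1).log (by positivity)).const_mul b)
  have h3 : HasFDerivAt (hfun b v) _ x := h1.add h2
  rw [h3.fderiv]
  simp

lemma hfun_pd2 {n : ℕ} {b : ℝ} {v : En n → ℝ} {x : En n} (hv : ContDiffAt ℝ 2 v x)
    (hpos : ∀ᶠ y in 𝓝 x, 0 ≤ v y) (i j : Fin n) :
    pd2 (hfun b v) i j x = (if i = j then 1 else 0) + b * ((v x + 1)⁻¹ * pd2 v i j x -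
      ((v x + 1)⁻¹ * fderiv ℝ v x (EuclideanSpace.single i 1)) *
      ((v x + 1)⁻¹ * fderiv ℝ v x (EuclideanSpace.single j 1))) := by
  have hev : ∀ᶠ y in 𝓝 x, DifferentiableAt ℝ v y :=
    (hv.eventually (by simp)).mono fun y hy => hy.differentiableAt (by norm_num)
  have h1 : DifferentiableAt ℝ (fderiv ℝ v) x :=
    (hv.fderiv_right (m := 1) (by norm_num)).differentiableAt (by norm_num)
  have heq : (fun y => fderiv ℝ (hfun b v) y (EuclideanSpace.single i 1)) =ᶠ[𝓝 x]
      fun y => inner ℝ (EuclideanSpace.single i 1) y +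
        b * ((v y + 1)⁻¹ * fderiv ℝ v y (EuclideanSpace.single i 1)) := by
    filter_upwards [hev, hpos] with y h1 h2
    rw [hfun_fderiv h1 h2, real_inner_comm]
  have hp := hpos.self_of_nhds
  have hp' : v x + 1 ≠ 0 := by positivity
  unfold pd2
  rw [heq.fderiv_eq]
  have hi : HasFDerivAt (fun y : En n => inner ℝ (EuclideanSpace.single i (1:ℝ)) y)
      (innerSL ℝ (EuclideanSpace.single i (1:ℝ))) x :=
    (innerSL ℝ (EuclideanSpace.single i (1:ℝ) : En n)).hasFDerivAt
  have hinv : HasFDerivAt (fun y => (v y + 1)⁻¹) (-((v x + 1) ^ 2)⁻¹ • fderiv ℝ v x) x :=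
    (hasDerivAt_inv hp').comp_hasFDerivAt x
      ((hv.differentiableAt (by norm_num)).hasFDerivAt.add_const 1)
  have hg : HasFDerivAt (fun y => fderiv ℝ v y (EuclideanSpace.single i 1)) _ x :=
    (h1.clm_apply (differentiableAt_const (c := (EuclideanSpace.single i 1 : En n)))).hasFDerivAt
  have := hi.add ((hinv.mul hg).const_mul b)
  have e : (∑ x : Fin n, 0) = (0:ℝ) := by simp
  rw [show fderiv ℝ (fun y => inner ℝ (EuclideanSpace.single i (1:ℝ)) y +
        b * ((v y + 1)⁻¹ * fderiv ℝ v y (EuclideanSpace.single i 1))) x = _ from this.fderiv]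
  simp only [_root_.add_apply, _root_.smul_apply, innerSL_apply_apply, smul_eq_mul]
  have : inner ℝ (EuclideanSpace.single i (1:ℝ)) (EuclideanSpace.single j (1:ℝ)) =
      if i = j then (1:ℝ) else 0 := by
    simp [EuclideanSpace.inner_single_left]
  rw [this]
  field_simp
  ring

lemma contact {n : ℕ} {lam Lam b : ℝ} (hlam : 0 < lam) (hb : 0 < b)
    {a : Fin n → Fin n → En n → ℝ} {v : En n → ℝ}
    (ha : UnifEllipticOn (ball (0 : En n) 1) lam Lam a)
    (hv : ContDiffOn ℝ 2 v (ball (0 : En n) 1))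
    (hpos : ∀ x ∈ ball (0 : En n) 1, 0 ≤ v x)
    (hsup : ∀ x ∈ ball (0 : En n) 1, ∑ i, ∑ j, a i j x * pd2 v i j x ≤ 0)
    {x y : En n} (hx : x ∈ ball (0 : En n) 1)
    (hmin : IsLocalMin (fun z => hfun b v z - inner ℝ y z) x) :
    gradMap (hfun b v) x = y ∧ (∀ i j, |pd2 (hfun b v) i j x| ≤ n * Lam / lam) ∧
      ‖y - x‖ ^ 2 ≤ b * (n * Lam / lam) := by
  have hvx : ContDiffAt ℝ 2 v x := hv.contDiffAt (isOpen_ball.mem_nhds hx)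
  have hposx : ∀ᶠ z in 𝓝 x, 0 ≤ v z := (isOpen_ball.eventually_mem hx).mono hpos
  have hC := hfun_contDiffAt (b := b) hvx (hpos x hx)
  have hCk : ContDiffAt ℝ 2 (fun z => hfun b v z - inner ℝ y z) x :=
    hC.sub ((innerSL ℝ y).contDiff.contDiffAt)
  have hfd : ∀ z, DifferentiableAt ℝ (hfun b v) z →
      fderiv ℝ (fun z => hfun b v z - inner ℝ y z) z = fderiv ℝ (hfun b v) z - innerSL ℝ y :=
    fun z hz => (hz.hasFDerivAt.sub (innerSL ℝ y).hasFDerivAt).fderiv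
  have hgrad : gradMap (hfun b v) x = y := by
    have h0 := hmin.fderiv_eq_zero
    rw [hfd x (hC.differentiableAt (by norm_num)), sub_eq_zero] at h0
    ext i
    simp [gradMap, h0, EuclideanSpace.inner_single_right]
  have hpd : ∀ i j, pd2 (fun z => hfun b v z - inner ℝ y z) i j x = pd2 (hfun b v) i j x := by
    intro i j
    unfold pd2
    have hev : ∀ᶠ z in 𝓝 x, DifferentiableAt ℝ (hfun b v) z :=
      (hC.eventually (by simp)).mono fun y hy => hy.differentiableAt (by norm_num)
    have : (fun z => fderiv ℝ (fun z => hfun b v z - inner ℝ y z) z (EuclideanSpace.single i 1))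
        =ᶠ[𝓝 x] fun z => fderiv ℝ (hfun b v) z (EuclideanSpace.single i 1) -
          innerSL ℝ y (EuclideanSpace.single i 1) := by
      filter_upwards [hev] with z hz
      rw [hfd z hz]; rfl
    rw [this.fderiv_eq, fderiv_sub_const]
  have hN := pd2_posSemidef hCk hmin
  simp only [hpd] at hN
  have hell := ell_trace (A := Matrix.of fun i j => a i j x) hN (fun ξ => (ha.2 x hx ξ).1)
  have htr : ∑ i, a i i x ≤ n * Lam := by
    calc ∑ i, a i i x ≤ ∑ _i : Fin n, Lam := Finset.sum_le_sum fun i _ => by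
          have := (ha.2 x hx (EuclideanSpace.single i 1)).2
          simpa [Pi.single_apply, ite_pow] using this
      _ = n * Lam := by simp
  set p : En n := WithLp.toLp 2 fun i => (v x + 1)⁻¹ * fderiv ℝ v x (EuclideanSpace.single i 1)
    with hp
  have hyx : y - x = b • p := by
    rw [← hgrad]
    ext i
    simp only [gradMap, PiLp.sub_apply, PiLp.smul_apply, hp, smul_eq_mul,
      hfun_fderiv (hvx.differentiableAt (by norm_num)) (hpos x hx)]
    simp [EuclideanSpace.inner_single_right]
  have hpl := (ha.2 x hx p).1
  have hpn : ∑ i, p i ^ 2 = ‖p‖ ^ 2 := by rw [EuclideanSpace.real_norm_sq_eq]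
  rw [hpn] at hpl
  have hsum : ∑ i, ∑ j, a i j x * pd2 (hfun b v) i j x = ∑ i, a i i x +
      b * ((v x + 1)⁻¹ * ∑ i, ∑ j, a i j x * pd2 v i j x - ∑ i, ∑ j, a i j x * p i * p j) := by
    have h1 : ∀ i j, a i j x * pd2 (hfun b v) i j x = (if i = j then a i j x else 0) +
        (b * ((v x + 1)⁻¹ * (a i j x * pd2 v i j x)) - b * (a i j x * p i * p j)) := by
      intro i j
      rw [hfun_pd2 hvx hposx]
      simp only [hp]
      split_ifs <;> ring
    simp only [h1, Finset.sum_add_distrib, Finset.sum_sub_distrib, ← Finset.mul_sum]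
    simp
    ring
  have hv1 : 0 < (v x + 1)⁻¹ := by have := hpos x hx; positivity
  have hneg : (v x + 1)⁻¹ * ∑ i, ∑ j, a i j x * pd2 v i j x ≤ 0 :=
    mul_nonpos_of_nonneg_of_nonpos hv1.le (hsup x hx)
  simp only [Matrix.of_apply] at hell
  rw [hsum] at hell
  have key : lam * ∑ i, pd2 (hfun b v) i i x + b * (lam * ‖p‖ ^ 2) ≤ n * Lam := by
    have := mul_le_mul_of_nonneg_left
      (show (v x + 1)⁻¹ * ∑ i, ∑ j, a i j x * pd2 v i j x - ∑ i, ∑ j, a i j x * p i * p j ≤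
        - (lam * ‖p‖ ^ 2) by linarith) hb.le
    linarith
  have htrN : 0 ≤ ∑ i, pd2 (hfun b v) i i x :=
    Finset.sum_nonneg fun i _ => psd_diag_nonneg hN i
  refine ⟨hgrad, fun i j => (psd_entry_le hN i j).trans ?_, ?_⟩
  · simp only [Matrix.of_apply]
    rw [le_div_iff₀ hlam]
    have : 0 ≤ b * (lam * ‖p‖ ^ 2) := by positivity
    linarith
  · rw [hyx, norm_smul, mul_pow, Real.norm_eq_abs, sq_abs, sq b, mul_assoc]
    gcongr
    rw [le_div_iff₀ hlam]
    have : 0 ≤ lam * ∑ i, pd2 (hfun b v) i i x := by positivity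
    linarith

lemma exists_contact {n : ℕ} {b : ℝ} (hb : 0 < b) (hb' : b ≤ 1 / 800) {v : En n → ℝ}
    (hv : ContDiffOn ℝ 2 v (ball (0 : En n) 1))
    (hpos : ∀ x ∈ ball (0 : En n) 1, 0 ≤ v x) (hv0 : v 0 ≤ 1)
    {y : En n} (hy : ‖y‖ ≤ 5 / 16) :
    ∃ x ∈ ball (0 : En n) 1, IsLocalMin (fun z => hfun b v z - inner ℝ y z) x ∧
      v x < 2 * Real.exp (1 / b) := by
  have hsub : closedBall (0 : En n) (15 / 16) ⊆ ball 0 1 := closedBall_subset_ball (by norm_num)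
  have hcont : ContinuousOn (fun z => hfun b v z - inner ℝ y z) (closedBall (0 : En n) (15 / 16)) := by
    intro z hz
    have hz' := hsub hz
    apply ContinuousAt.continuousWithinAt
    exact (hfun_contDiffAt (hv.contDiffAt (isOpen_ball.mem_nhds hz')) (hpos z hz')).continuousAt.sub
      (innerSL ℝ y).continuous.continuousAt
  obtain ⟨x, hx, hxm⟩ := (isCompact_closedBall (0 : En n) (15 / 16)).exists_isMinOn
    ⟨0, by simp; norm_num⟩ hcont
  have hx1 := hsub hx
  have h00 : (0 : En n) ∈ ball (0 : En n) 1 := by simp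
  have hlog2 : Real.log 2 ≤ 1 := by have := Real.log_two_lt_d9; linarith
  have h0 : hfun b v x - inner ℝ y x ≤ b * Real.log 2 := by
    have h := hxm (show (0 : En n) ∈ closedBall (0 : En n) (15 / 16) by simp; norm_num)
    simp only [mem_ofPred_eq, inner_zero_right, sub_zero] at h
    refine h.trans ?_
    simp only [hfun, norm_zero]
    have : Real.log (v 0 + 1) ≤ Real.log 2 :=
      Real.log_le_log (by have := hpos 0 h00; linarith) (by linarith)
    have := mul_le_mul_of_nonneg_left this hb.le
    linarith
  unfold hfun at h0
  have hin : inner ℝ y x ≤ ‖y‖ * ‖x‖ := real_inner_le_norm y x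
  have hin2 : ‖y‖ * ‖x‖ ≤ 5 / 16 * ‖x‖ := by gcongr
  have hlog : 0 ≤ Real.log (v x + 1) := Real.log_nonneg (by linarith [hpos x hx1])
  have hblog : 0 ≤ b * Real.log (v x + 1) := by positivity
  have hb2 : b * Real.log 2 ≤ 1 / 800 := by
    have := Real.log_nonneg (show (1:ℝ) ≤ 2 by norm_num)
    nlinarith
  have hxle : ‖x‖ ≤ 15 / 16 := by simpa using hx
  have hlt : ‖x‖ < 15 / 16 := by
    rcases hxle.lt_or_eq with h | h
    · exact h
    · exfalso
      rw [h] at h0 hin hin2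
      linarith
  refine ⟨x, hx1, ?_, ?_⟩
  · exact hxm.isLocalMin (mem_of_superset (isOpen_ball.mem_nhds (by simpa using hlt))
      ball_subset_closedBall)
  · have h3 : b * Real.log (v x + 1) ≤ b * Real.log 2 + 1 := by
      nlinarith [norm_nonneg x]
    have h4 : Real.log (v x + 1) ≤ Real.log 2 + 1 / b := by
      rw [← mul_le_mul_iff_right₀ hb]
      calc _ ≤ _ := h3
        _ = _ := by field_simp
    have h5 := Real.exp_le_exp.2 h4
    rw [Real.exp_log (by linarith [hpos x hx1]), Real.exp_add, Real.exp_log (by norm_num)] at h5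
    linarith
/-- **Contact/measure estimate.** There are `M > 1` and `θ ∈ (0,1)` depending only on
`n, λ, Λ` such that any nonnegative `C²` supersolution of `Σ a_{ij} ∂_{ij} v ≤ 0` in `B₁`
with `v(0) ≤ 1` satisfies `|{x ∈ B_{1/8}(x₀) : v(x) < M}| ≥ θ |B_{1/8}(x₀)|` for every
`x₀ ∈ B_{1/4}`. -/
theorem contact_measure_estimate
    (n : ℕ) (hn : 2 ≤ n) (lam Lam : ℝ) (hlam : 0 < lam) (hLam : lam ≤ Lam) :
    ∃ M θ : ℝ, 1 < M ∧ θ ∈ Set.Ioo (0 : ℝ) 1 ∧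
      ∀ (a : Fin n → Fin n → En n → ℝ) (v : En n → ℝ),
        UnifEllipticOn (ball (0 : En n) 1) lam Lam a →
        ContDiffOn ℝ 2 v (ball (0 : En n) 1) →
        (∀ x ∈ ball (0 : En n) 1, 0 ≤ v x) →
        (∀ x ∈ ball (0 : En n) 1, ∑ i, ∑ j, a i j x * pd2 v i j x ≤ 0) →
        v 0 ≤ 1 →
        ∀ x₀ ∈ ball (0 : En n) (1 / 4),
          ENNReal.ofReal θ * volume (ball x₀ (1 / 8)) ≤
            volume {x ∈ ball x₀ (1 / 8) | v x < M} := by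
  have hn0 : (2:ℝ) ≤ n := by exact_mod_cast hn
  have hLam0 : 0 < Lam := hlam.trans_le hLam
  set C : ℝ := n * Lam / lam with hCdef
  have hC1 : 2 ≤ C := by
    rw [hCdef, le_div_iff₀ hlam]
    nlinarith
  set b : ℝ := 1 / (400 * C) with hbdef
  have hb : 0 < b := by positivity
  have hb' : b ≤ 1 / 800 := by
    rw [hbdef]
    apply one_div_le_one_div_of_le <;> linarith
  have hbC : b * C = 1 / 400 := by
    rw [hbdef]; field_simp
  set D : ℝ := n.factorial * C ^ n with hD
  have hD1 : 1 ≤ D := by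
    have h1 : (1:ℝ) ≤ n.factorial := by exact_mod_cast n.factorial_pos
    have h2 : 1 ≤ C ^ n := one_le_pow₀ (by linarith)
    nlinarith
  have h2n : (1:ℝ) < 2 ^ n := one_lt_pow₀ (by norm_num) (by omega)
  have hDn : 1 < 2 ^ n * D := by nlinarith
  have hDn0 : 0 < 2 ^ n * D := by linarith
  refine ⟨2 * Real.exp (1 / b), (2 ^ n * D)⁻¹, ?_, ⟨by positivity, inv_lt_one_of_one_lt₀ hDn⟩, ?_⟩
  · have := Real.one_le_exp (show 0 ≤ 1 / b by positivity)
    linarith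
  intro a v ha hv hpos hsup hv0 x₀ hx₀
  have hx₀' : ‖x₀‖ < 1 / 4 := by simpa using hx₀
  have hsubb : ball x₀ (1 / 8) ⊆ ball (0 : En n) 1 := by
    apply ball_subset_ball'
    rw [dist_zero_right]; linarith
  set E : Set (En n) := {x ∈ ball x₀ (1 / 8) | v x < 2 * Real.exp (1 / b)} with hE
  have hEo : IsOpen E :=
    (hv.continuousOn.mono hsubb).isOpen_inter_preimage isOpen_ball isOpen_Iio
  set S : Set (En n) := E ∩ {x | ∀ i j, |pd2 (hfun b v) i j x| ≤ C} with hS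
  have hmeas : ∀ i j, Measurable fun x => pd2 (hfun b v) i j x := fun i j =>
    measurable_fderiv_apply_const ℝ _ _
  have hSm : MeasurableSet S := by
    apply hEo.measurableSet.inter
    simp only [ofPred_forall]
    exact MeasurableSet.iInter fun i => MeasurableSet.iInter fun j =>
      measurableSet_le (hmeas i j).abs measurable_const
  have hcover : ball x₀ (1 / 16) ⊆ gradMap (hfun b v) '' S := by
    intro y hy
    have hyx₀ : ‖y - x₀‖ < 1 / 16 := by simpa [dist_eq_norm] using hy
    have hyn : ‖y‖ ≤ 5 / 16 := by
      have := norm_add_le (y - x₀) x₀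
      rw [sub_add_cancel] at this
      linarith
    obtain ⟨x, hx, hmin, hlt⟩ := exists_contact hb hb' hv hpos hv0 hyn
    obtain ⟨h1, h2, h3⟩ := contact hlam hb ha hv hpos hsup hx hmin
    rw [← hCdef, hbC] at h3
    have h4 : ‖y - x‖ ≤ 1 / 20 := abs_le_of_sq_le_sq' (by norm_num; linarith) (by norm_num) |>.2
    refine ⟨x, ⟨⟨?_, hlt⟩, h2⟩, h1⟩
    rw [mem_ball, dist_eq_norm]
    have := norm_sub_le (y - x₀) (y - x)
    rw [show y - x₀ - (y - x) = x - x₀ by abel] at this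
    linarith
  have harea := area (h := hfun b v) (C := C) hSm (fun x hx => by
    have hxb := hsubb hx.1.1
    exact hfun_contDiffAt (hv.contDiffAt (isOpen_ball.mem_nhds hxb)) (hpos x hxb))
    (fun x hx => hx.2)
  have hle : volume (ball x₀ (1 / 16)) ≤ ENNReal.ofReal D * volume E :=
    (measure_mono hcover).trans (harea.trans (by gcongr; exact inter_subset_left))
  have hball : volume (ball x₀ (1 / 8)) = ENNReal.ofReal (2 ^ n) * volume (ball x₀ (1 / 16)) := by
    rw [show (1 / 8 : ℝ) = 2 * (1 / 16) by norm_num,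
      Measure.addHaar_ball_mul_of_pos volume x₀ (by norm_num) (1 / 16),
      Measure.addHaar_ball_center volume x₀]
    simp
  rw [hball]
  calc ENNReal.ofReal (2 ^ n * D)⁻¹ * (ENNReal.ofReal (2 ^ n) * volume (ball x₀ (1 / 16)))
      ≤ ENNReal.ofReal (2 ^ n * D)⁻¹ * (ENNReal.ofReal (2 ^ n) * (ENNReal.ofReal D * volume E)) := by
        gcongr
    _ = ENNReal.ofReal ((2 ^ n * D)⁻¹ * (2 ^ n * D)) * volume E := by
        rw [ENNReal.ofReal_mul (p := (2 ^ n * D)⁻¹) (by positivity),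
          ENNReal.ofReal_mul (p := 2 ^ n) (q := D) (by positivity)]
        ring
    _ = volume E := by
        rw [inv_mul_cancel₀ hDn0.ne']; simp
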